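/- If two countable recursively saturated models M and N of PA have the same theory and the same standard system, then they are isomorphic. -/

import Mathlib

/-! # A deep embedding of the language of arithmetic and of Peano Arithmetic -/

/-- Terms of the language `{0, 1, +, ⬝, <}` of arithmetic, with variables
indexed by natural numbers. -/
inductive ATerm : Type
  | var : ℕ → ATerm
  | zero : ATerm
  | one : ATerm
  | add : ATerm → ATerm → ATerm
  | mul : ATerm → ATerm → ATerm
deriving DecidableEq

/-- First-order formulas of the language of arithmetic, with logical constants
`¬, ∨, ∃, =` (and the ordering `<`). -/
inductive AForm : Type
  | eq : ATerm → ATerm → AForm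
  | lt : ATerm → ATerm → AForm
  | not : AForm → AForm
  | or : AForm → AForm → AForm
  | ex : ℕ → AForm → AForm
deriving DecidableEq

namespace ATerm

/-- Value of a term in a structure, under an assignment. -/
def val {M : Type*} [Zero M] [One M] [Add M] [Mul M] (a : ℕ → M) : ATerm → M
  | var n => a n
  | zero => 0
  | one => 1
  | add s t => s.val a + t.val a
  | mul s t => s.val a * t.val a

/-- Free variables of a term. -/
def fv : ATerm → Finset ℕ
  | var n => {n}
  | zero => ∅
  | one => ∅
  | add s t => s.fv ∪ t.fv
  | mul s t => s.fv ∪ t.fv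

/-- Substitution of a term for a variable in a term. -/
def subst (v : ℕ) (t : ATerm) : ATerm → ATerm
  | var n => if n = v then t else var n
  | zero => zero
  | one => one
  | add s u => add (subst v t s) (subst v t u)
  | mul s u => mul (subst v t s) (subst v t u)

end ATerm

namespace AForm

/-- Tarskian satisfaction of a formula in a structure, under an assignment. -/
def Sat {M : Type*} [Zero M] [One M] [Add M] [Mul M] [LT M] (a : ℕ → M) : AForm → Prop
  | eq s t => s.val a = t.val a
  | lt s t => s.val a < t.val a
  | not φ => ¬ φ.Sat a
  | or φ ψ => φ.Sat a ∨ ψ.Sat a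
  | ex n φ => ∃ x : M, φ.Sat (Function.update a n x)

/-- Free variables of a formula. -/
def fv : AForm → Finset ℕ
  | eq s t => s.fv ∪ t.fv
  | lt s t => s.fv ∪ t.fv
  | not φ => φ.fv
  | or φ ψ => φ.fv ∪ ψ.fv
  | ex n φ => φ.fv.erase n

/-- Substitution of a term for a variable in a formula (stopping at binders of
the same variable). -/
def subst (v : ℕ) (t : ATerm) : AForm → AForm
  | eq s u => eq (ATerm.subst v t s) (ATerm.subst v t u)
  | lt s u => lt (ATerm.subst v t s) (ATerm.subst v t u)
  | not φ => not (subst v t φ)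
  | or φ ψ => or (subst v t φ) (subst v t ψ)
  | ex n φ => if n = v then ex n φ else ex n (subst v t φ)

/-- Implication, defined from `¬` and `∨`. -/
def imp (φ ψ : AForm) : AForm := or (not φ) ψ

/-- Conjunction, defined from `¬` and `∨`. -/
def and (φ ψ : AForm) : AForm := not (or (not φ) (not ψ))

/-- Universal quantification, defined from `¬` and `∃`. -/
def all (n : ℕ) (φ : AForm) : AForm := not (ex n (not φ))

end AForm

open ATerm AForm

/-- The finitely many base (PA⁻) axioms of Peano Arithmetic, as (open)
formulas; their universal closures are understood semantically. -/
def paBaseAx : List AForm :=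
  let x := var 0; let y := var 1; let z := var 2
  [ AForm.eq (ATerm.add x (ATerm.add y z)) (ATerm.add (ATerm.add x y) z)
  , AForm.eq (ATerm.add x y) (ATerm.add y x)
  , AForm.eq (ATerm.mul x (ATerm.mul y z)) (ATerm.mul (ATerm.mul x y) z)
  , AForm.eq (ATerm.mul x y) (ATerm.mul y x)
  , AForm.eq (ATerm.mul x (ATerm.add y z)) (ATerm.add (ATerm.mul x y) (ATerm.mul x z))
  , AForm.eq (ATerm.add x ATerm.zero) x
  , AForm.eq (ATerm.mul x ATerm.zero) ATerm.zero
  , AForm.eq (ATerm.mul x ATerm.one) x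
  , AForm.not (AForm.lt x x)
  , AForm.imp (AForm.lt x y) (AForm.imp (AForm.lt y z) (AForm.lt x z))
  , AForm.or (AForm.lt x y) (AForm.or (AForm.eq x y) (AForm.lt y x))
  , AForm.imp (AForm.lt x y) (AForm.lt (ATerm.add x z) (ATerm.add y z))
  , AForm.imp (AForm.lt ATerm.zero z)
      (AForm.imp (AForm.lt x y) (AForm.lt (ATerm.mul x z) (ATerm.mul y z)))
  , AForm.not (AForm.lt x ATerm.zero)
  , AForm.and (AForm.imp (AForm.lt x y)
        (AForm.or (AForm.lt (ATerm.add x ATerm.one) y) (AForm.eq (ATerm.add x ATerm.one) y)))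
      (AForm.imp (AForm.or (AForm.lt (ATerm.add x ATerm.one) y) (AForm.eq (ATerm.add x ATerm.one) y))
        (AForm.lt x y))
  , AForm.lt ATerm.zero ATerm.one ]

/-- The induction axiom for the formula `φ` in the variable `v`:
`(φ(0) ∧ ∀v (φ(v) → φ(v+1))) → ∀v φ(v)` (an open formula; its universal
closure is understood semantically). -/
def indAx (v : ℕ) (φ : AForm) : AForm :=
  AForm.imp
    (AForm.and (φ.subst v ATerm.zero)
      (AForm.all v (AForm.imp φ (φ.subst v (ATerm.add (ATerm.var v) ATerm.one)))))
    (AForm.all v φ)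

/-- The axioms of Peano Arithmetic: the base axioms together with the full
induction scheme. -/
def PAax : Set AForm :=
  {φ | φ ∈ paBaseAx} ∪ {ψ | ∃ (v : ℕ) (φ : AForm), ψ = indAx v φ}

/-- `M` is a model of PA: every axiom of PA is satisfied under every
assignment. -/
def IsPAModel (M : Type*) [Zero M] [One M] [Add M] [Mul M] [LT M] : Prop :=
  ∀ φ ∈ PAax, ∀ a : ℕ → M, AForm.Sat a φ

/-- The standard (numeral) embedding of ℕ into a structure. -/
def std {M : Type*} [Zero M] [One M] [Add M] : ℕ → M :=
  fun n => n.rec (0 : M) fun _ ih => ih + 1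

section InternalArithmetic

variable {M : Type*} [Zero M] [One M] [Add M] [Mul M] [LT M]

/-- `≤` in a model. -/
def mle (a b : M) : Prop := a < b ∨ a = b

/-- Internal divisibility. -/
def mdvd (a b : M) : Prop := ∃ c : M, a * c = b

/-- Gödel's β-function, internally: `β(c, d, i) = y`. -/
def mbeta (c d i y : M) : Prop :=
  ∃ q : M, c = (1 + (i + 1) * d) * q + y ∧ y < 1 + (i + 1) * d

/-- Internal exponentiation, via the β-function: `p ^ i = y`. -/
def mpow (p i y : M) : Prop :=
  ∃ c d : M, mbeta c d 0 1 ∧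
    (∀ j u : M, j < i → mbeta c d j u → mbeta c d (j + 1) (p * u)) ∧
    mbeta c d i y

/-- Internal Ackermann membership: the `a`-th binary digit of `b` is `1`. -/
def mack (a b : M) : Prop :=
  ∃ p u v : M, mpow (1 + 1) a p ∧ b = u * (p + p) + (p + v) ∧ v < p

/-- `(c)` at the prime `p`: the exponent of `p` in the prime factorization of
`c` is `k`. -/
def mexpAt (p c k : M) : Prop :=
  ∃ v : M, mpow p k v ∧ mdvd v c ∧ ¬ mdvd (v * p) c

end InternalArithmetic

/-- A proper cut of a model: a nonempty proper initial segment closed under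
successor. -/
def IsCut {M : Type*} [Zero M] [One M] [Add M] [Mul M] [LT M] (I : Set M) : Prop :=
  I.Nonempty ∧ I ≠ Set.univ ∧ (∀ x ∈ I, ∀ y : M, y < x → y ∈ I) ∧ ∀ x ∈ I, x + 1 ∈ I

/-- The cut `I` is ℕ-coded from below in `M`: for some `c`, the set
`{(c)_n : n ∈ ℕ}` of exponents of the standard primes in `c` is cofinal in `I`. -/
def CodedFromBelow {M : Type*} [Zero M] [One M] [Add M] [Mul M] [LT M] (I : Set M) : Prop :=
  ∃ c : M, ∀ x ∈ I, ∃ (n : ℕ) (k : M),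
    mexpAt (std (Nat.nth Nat.Prime n)) c k ∧ k ∈ I ∧ mle x k

/-- The cut `I` is ℕ-coded from above in `M`: for some `c`, the set
`{(c)_n : n ∈ ℕ}` is downward cofinal in `M \ I`. -/
def CodedFromAbove {M : Type*} [Zero M] [One M] [Add M] [Mul M] [LT M] (I : Set M) : Prop :=
  ∃ c : M, ∀ x ∉ I, ∃ (n : ℕ) (k : M),
    mexpAt (std (Nat.nth Nat.Prime n)) c k ∧ k ∉ I ∧ mle k x

/-- The standard system of a model: the sets of natural numbers coded in `M`
via (internal) Ackermann membership. -/
def SSy (M : Type*) [Zero M] [One M] [Add M] [Mul M] [LT M] : Set (Set ℕ) :=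
  {A : Set ℕ | ∃ c : M, ∀ n : ℕ, n ∈ A ↔ mack (std n) c}

/-- A Gödel numbering of terms. -/
def encT : ATerm → ℕ
  | ATerm.var n => Nat.pair 0 n
  | ATerm.zero => Nat.pair 1 0
  | ATerm.one => Nat.pair 2 0
  | ATerm.add s t => Nat.pair 3 (Nat.pair (encT s) (encT t))
  | ATerm.mul s t => Nat.pair 4 (Nat.pair (encT s) (encT t))

/-- A Gödel numbering of formulas. -/
def encF : AForm → ℕ
  | AForm.eq s t => Nat.pair 0 (Nat.pair (encT s) (encT t))
  | AForm.lt s t => Nat.pair 1 (Nat.pair (encT s) (encT t))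
  | AForm.not φ => Nat.pair 2 (encF φ)
  | AForm.or φ ψ => Nat.pair 3 (Nat.pair (encF φ) (encF ψ))
  | AForm.ex n φ => Nat.pair 4 (Nat.pair n (encF φ))

/-- `M` is recursively saturated: every recursive type in one variable `v`,
with finitely many parameters, that is finitely satisfiable in `M` is realized
in `M`. -/
def RecSat (M : Type*) [Zero M] [One M] [Add M] [Mul M] [LT M] : Prop :=
  ∀ (Φ : Set AForm) (v : ℕ) (a : ℕ → M),
    ComputablePred (fun n : ℕ => ∃ φ ∈ Φ, encF φ = n) →
    (∃ s : Finset ℕ, ∀ φ ∈ Φ, AForm.fv φ ⊆ insert v s) →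
    (∀ s : Finset AForm, ↑s ⊆ Φ →
      ∃ x : M, ∀ φ ∈ s, AForm.Sat (Function.update a v x) φ) →
    ∃ x : M, ∀ φ ∈ Φ, AForm.Sat (Function.update a v x) φ


namespace RSIso

/-! ### Strong recursion on codes -/

def rr (m : ℕ) : ℕ := m.unpair.2

def srec (G : ℕ × ℕ × ℕ × ℕ → ℕ) (m : ℕ) : ℕ :=
  G (m, (if _h : rr m < m then srec G (rr m) else 0),
    (if _h : (rr m).unpair.1 < m then srec G (rr m).unpair.1 else 0),
    (if _h : (rr m).unpair.2 < m then srec G (rr m).unpair.2 else 0))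
termination_by m

theorem getD_range (f : ℕ → ℕ) (n i : ℕ) :
    ((List.range n).map f).getD i 0 = if i < n then f i else 0 := by
  by_cases h : i < n
  · simp [List.getD, h]
  · simp [List.getD, h]

theorem srec_primrec {G : ℕ × ℕ × ℕ × ℕ → ℕ} (hG : Primrec G) : Primrec (srec G) := by
  have hr : Primrec rr := Primrec.snd.comp Primrec.unpair
  have hlen : Primrec (fun L : List ℕ => L.length) := Primrec.list_length
  have hrl := hr.comp hlen
  have h1 := Primrec.fst.comp (Primrec.unpair.comp hrl)
  have h2 := Primrec.snd.comp (Primrec.unpair.comp hrl)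
  have hg : Primrec (fun L : List ℕ => G (L.length, L.getD (rr L.length) 0,
      L.getD (rr L.length).unpair.1 0, L.getD (rr L.length).unpair.2 0)) :=
    hG.comp (hlen.pair (((Primrec.list_getD 0).comp Primrec.id hrl).pair
      (((Primrec.list_getD 0).comp Primrec.id h1).pair ((Primrec.list_getD 0).comp Primrec.id h2))))
  have key : Primrec₂ (fun (_ : Unit) n => srec G n) := by
    refine Primrec.nat_strong_rec _ (g := fun _ L => some (G (L.length, L.getD (rr L.length) 0,
      L.getD (rr L.length).unpair.1 0, L.getD (rr L.length).unpair.2 0))) ?_ ?_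
    · exact (Primrec.option_some.comp (hg.comp Primrec.snd))
    · intro _ n
      simp only [List.length_map, List.length_range, getD_range]
      conv_rhs => rw [srec]
      simp
  exact key.comp (Primrec.const ()) Primrec.id

theorem lt_pair_right {t r : ℕ} (ht : 1 ≤ t) : r < Nat.pair t r := by
  unfold Nat.pair; split_ifs <;> nlinarith

theorem srec_pair (G : ℕ × ℕ × ℕ × ℕ → ℕ) {t r : ℕ} (ht : 1 ≤ t) :
    srec G (Nat.pair t r) = G (Nat.pair t r, srec G r, srec G r.unpair.1, srec G r.unpair.2) := by
  have h := lt_pair_right (r := r) ht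
  have h1 := lt_of_le_of_lt (Nat.unpair_left_le r) h
  have h2 := lt_of_le_of_lt (Nat.unpair_right_le r) h
  conv_lhs => rw [srec]
  simp [rr, h, h1, h2]

def GT (x : ℕ × ℕ × ℕ × ℕ) : ℕ :=
  if x.1.unpair.1 = 0 then x.1.unpair.2 + 2 else
  if x.1.unpair.1 ≤ 2 then (if x.1.unpair.2 = 0 then 1 else 0) else
  if x.1.unpair.1 ≤ 4 then
    (if x.2.2.1 = 0 then 0 else if x.2.2.2 = 0 then 0 else max x.2.2.1 x.2.2.2) else 0

/-- Level of a term code: `0` if invalid, otherwise one more than the least strict variable bound. -/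
def TB : ℕ → ℕ := srec GT

theorem GT_primrec : Primrec GT := by
  have hu : Primrec (fun x : ℕ × ℕ × ℕ × ℕ => x.1.unpair) := Primrec.unpair.comp Primrec.fst
  have ht := Primrec.fst.comp hu
  have hr := Primrec.snd.comp hu
  have h1 : Primrec (fun x : ℕ × ℕ × ℕ × ℕ => x.2.2.1) :=
    Primrec.fst.comp (Primrec.snd.comp Primrec.snd)
  have h2 : Primrec (fun x : ℕ × ℕ × ℕ × ℕ => x.2.2.2) :=
    Primrec.snd.comp (Primrec.snd.comp Primrec.snd)
  have c (n : ℕ) : Primrec (fun _ : ℕ × ℕ × ℕ × ℕ => n) := Primrec.const n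
  unfold GT
  refine Primrec.ite (Primrec.eq.comp ht (c 0)) (Primrec.nat_add.comp hr (c 2)) ?_
  refine Primrec.ite (Primrec.nat_le.comp ht (c 2))
    (Primrec.ite (Primrec.eq.comp hr (c 0)) (c 1) (c 0)) ?_
  refine Primrec.ite (Primrec.nat_le.comp ht (c 4)) ?_ (c 0)
  exact Primrec.ite (Primrec.eq.comp h1 (c 0)) (c 0)
    (Primrec.ite (Primrec.eq.comp h2 (c 0)) (c 0) (Primrec.nat_max.comp h1 h2))

theorem TB_primrec : Primrec TB := srec_primrec GT_primrec

def GF (x : ℕ × ℕ × ℕ × ℕ) : ℕ :=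
  if x.1.unpair.1 ≤ 1 then
    (if TB x.1.unpair.2.unpair.1 = 0 then 0 else if TB x.1.unpair.2.unpair.2 = 0 then 0 else
      max (TB x.1.unpair.2.unpair.1) (TB x.1.unpair.2.unpair.2)) else
  if x.1.unpair.1 = 2 then x.2.1 else
  if x.1.unpair.1 = 3 then (if x.2.2.1 = x.2.2.2 then x.2.2.1 else 0) else
  if x.1.unpair.1 = 4 then
    (if x.2.2.2 = x.1.unpair.2.unpair.1 + 2 then x.1.unpair.2.unpair.1 + 1 else 0) else 0

/-- Level of a formula code. -/
def LV : ℕ → ℕ := srec GF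

theorem GF_primrec : Primrec GF := by
  have hu : Primrec (fun x : ℕ × ℕ × ℕ × ℕ => x.1.unpair) := Primrec.unpair.comp Primrec.fst
  have ht := Primrec.fst.comp hu
  have hr := Primrec.snd.comp hu
  have h0 : Primrec (fun x : ℕ × ℕ × ℕ × ℕ => x.2.1) :=
    Primrec.fst.comp Primrec.snd
  have h1 : Primrec (fun x : ℕ × ℕ × ℕ × ℕ => x.2.2.1) :=
    Primrec.fst.comp (Primrec.snd.comp Primrec.snd)
  have h2 : Primrec (fun x : ℕ × ℕ × ℕ × ℕ => x.2.2.2) :=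
    Primrec.snd.comp (Primrec.snd.comp Primrec.snd)
  have c (n : ℕ) : Primrec (fun _ : ℕ × ℕ × ℕ × ℕ => n) := Primrec.const n
  have r1 := Primrec.fst.comp (Primrec.unpair.comp hr)
  have r2 := Primrec.snd.comp (Primrec.unpair.comp hr)
  have t1 := TB_primrec.comp r1
  have t2 := TB_primrec.comp r2
  unfold GF
  refine Primrec.ite (Primrec.nat_le.comp ht (c 1))
    (Primrec.ite (Primrec.eq.comp t1 (c 0)) (c 0)
      (Primrec.ite (Primrec.eq.comp t2 (c 0)) (c 0) (Primrec.nat_max.comp t1 t2))) ?_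
  refine Primrec.ite (Primrec.eq.comp ht (c 2)) h0 ?_
  refine Primrec.ite (Primrec.eq.comp ht (c 3)) (Primrec.ite (Primrec.eq.comp h1 h2) h1 (c 0)) ?_
  exact Primrec.ite (Primrec.eq.comp ht (c 4))
    (Primrec.ite (Primrec.eq.comp h2 (Primrec.nat_add.comp r1 (c 2)))
      (Primrec.nat_add.comp r1 (c 1)) (c 0)) (c 0)

theorem LV_primrec : Primrec LV := srec_primrec GF_primrec

theorem TB_zero (r : ℕ) : TB (Nat.pair 0 r) = r + 2 := by
  unfold TB; rw [srec]; simp [GT]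

theorem TB_pair {t : ℕ} (ht : 1 ≤ t) (r : ℕ) :
    TB (Nat.pair t r) = GT (Nat.pair t r, TB r, TB r.unpair.1, TB r.unpair.2) := srec_pair GT ht

theorem LV_zero (r : ℕ) : LV (Nat.pair 0 r) =
    if TB r.unpair.1 = 0 then 0 else if TB r.unpair.2 = 0 then 0 else
      max (TB r.unpair.1) (TB r.unpair.2) := by
  unfold LV; rw [srec]; simp [GF]

theorem LV_pair {t : ℕ} (ht : 1 ≤ t) (r : ℕ) :
    LV (Nat.pair t r) = GF (Nat.pair t r, LV r, LV r.unpair.1, LV r.unpair.2) := srec_pair GF ht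

/-! ### Levels of terms and formulas -/

def tlv (t : ATerm) : ℕ := TB (encT t)
def lv (φ : AForm) : ℕ := LV (encF φ)

theorem tlv_var (n : ℕ) : tlv (ATerm.var n) = n + 2 := TB_zero n
theorem tlv_zero : tlv ATerm.zero = 1 := by simp [tlv, encT, TB_pair, GT]
theorem tlv_one : tlv ATerm.one = 1 := by simp [tlv, encT, TB_pair, GT]
theorem tlv_add (s t : ATerm) : tlv (ATerm.add s t) =
    if tlv s = 0 then 0 else if tlv t = 0 then 0 else max (tlv s) (tlv t) := by
  simp [tlv, encT, TB_pair, GT] <;> rfl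
theorem tlv_mul (s t : ATerm) : tlv (ATerm.mul s t) =
    if tlv s = 0 then 0 else if tlv t = 0 then 0 else max (tlv s) (tlv t) := by
  simp [tlv, encT, TB_pair, GT] <;> rfl

theorem tlv_pos (t : ATerm) : 0 < tlv t := by
  induction t with
  | var n => simp [tlv_var]
  | zero => simp [tlv_zero]
  | one => simp [tlv_one]
  | add s t hs ht => rw [tlv_add, if_neg hs.ne', if_neg ht.ne']; exact lt_max_of_lt_left hs
  | mul s t hs ht => rw [tlv_mul, if_neg hs.ne', if_neg ht.ne']; exact lt_max_of_lt_left hs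

theorem lv_eq (s t : ATerm) : lv (AForm.eq s t) = max (tlv s) (tlv t) := by
  have hs := (tlv_pos s).ne'
  have ht := (tlv_pos t).ne'
  unfold tlv at *
  simp [lv, encF, LV_zero, hs, ht]
theorem lv_lt (s t : ATerm) : lv (AForm.lt s t) = max (tlv s) (tlv t) := by
  have hs := (tlv_pos s).ne'
  have ht := (tlv_pos t).ne'
  unfold tlv at *
  simp [lv, encF, LV_pair, GF, hs, ht]
theorem lv_not (φ : AForm) : lv (AForm.not φ) = lv φ := by
  simp [lv, encF, LV_pair, GF]
theorem lv_or (φ ψ : AForm) : lv (AForm.or φ ψ) = if lv φ = lv ψ then lv φ else 0 := by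
  simp [lv, encF, LV_pair, GF] <;> rfl
theorem lv_ex (n : ℕ) (φ : AForm) : lv (AForm.ex n φ) = if lv φ = n + 2 then n + 1 else 0 := by
  simp [lv, encF, LV_pair, GF] <;> rfl

theorem tlv_fv (t : ATerm) : ∀ k, tlv t ≤ k + 1 → t.fv ⊆ Finset.range k := by
  induction t with
  | var n => intro k h; rw [tlv_var] at h; simp [ATerm.fv]; omega
  | zero => intro k h; simp [ATerm.fv]
  | one => intro k h; simp [ATerm.fv]
  | add s t hs ht =>
    intro k h
    rw [tlv_add, if_neg (tlv_pos _).ne', if_neg (tlv_pos _).ne', max_le_iff] at h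
    exact Finset.union_subset (hs k h.1) (ht k h.2)
  | mul s t hs ht =>
    intro k h
    rw [tlv_mul, if_neg (tlv_pos _).ne', if_neg (tlv_pos _).ne', max_le_iff] at h
    exact Finset.union_subset (hs k h.1) (ht k h.2)

theorem lv_fv (φ : AForm) : ∀ k, lv φ = k + 1 → φ.fv ⊆ Finset.range k := by
  induction φ with
  | eq s t =>
    intro k h
    rw [lv_eq] at h
    exact Finset.union_subset (tlv_fv s k (h ▸ le_max_left _ _)) (tlv_fv t k (h ▸ le_max_right _ _))
  | lt s t =>
    intro k h
    rw [lv_lt] at h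
    exact Finset.union_subset (tlv_fv s k (h ▸ le_max_left _ _)) (tlv_fv t k (h ▸ le_max_right _ _))
  | not φ ih => intro k h; rw [lv_not] at h; exact ih k h
  | or φ ψ h1 h2 =>
    intro k h
    rw [lv_or] at h
    split_ifs at h with e
    exact Finset.union_subset (h1 k h) (h2 k (e ▸ h))
  | ex n φ ih =>
    intro k h
    rw [lv_ex] at h
    split_ifs at h with e
    have := ih (n + 1) e
    intro x hx
    simp only [AForm.fv, Finset.mem_erase] at hx
    have := Finset.mem_range.1 (this hx.2)
    rw [Finset.mem_range]; omega

theorem TB_decode : ∀ m, TB m ≠ 0 → ∃ t, encT t = m := by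
  intro m
  induction m using Nat.strong_induction_on with
  | _ m ih =>
    intro h
    obtain ⟨t, r, rfl⟩ : ∃ t r, m = Nat.pair t r := ⟨_, _, (Nat.pair_unpair m).symm⟩
    rcases Nat.eq_zero_or_pos t with rfl | ht
    · exact ⟨ATerm.var r, rfl⟩
    have hr := lt_pair_right (r := r) ht
    have h1 := lt_of_le_of_lt (Nat.unpair_left_le r) hr
    have h2 := lt_of_le_of_lt (Nat.unpair_right_le r) hr
    rw [TB_pair ht] at h
    simp only [GT, Nat.unpair_pair] at h
    split_ifs at h with c1 c2 c3 c4 c5 c6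
    · omega
    · subst c3
      obtain rfl | rfl : t = 1 ∨ t = 2 := by omega
      · exact ⟨ATerm.zero, rfl⟩
      · exact ⟨ATerm.one, rfl⟩
    · exact absurd rfl h
    · exact absurd rfl h
    · exact absurd rfl h
    · obtain ⟨s1, e1⟩ := ih _ h1 c5
      obtain ⟨s2, e2⟩ := ih _ h2 c6
      obtain rfl | rfl : t = 3 ∨ t = 4 := by omega
      · exact ⟨ATerm.add s1 s2, by simp [encT, e1, e2]⟩
      · exact ⟨ATerm.mul s1 s2, by simp [encT, e1, e2]⟩
    · exact absurd rfl h

theorem LV_decode : ∀ m, LV m ≠ 0 → ∃ φ, encF φ = m := by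
  intro m
  induction m using Nat.strong_induction_on with
  | _ m ih =>
    intro h
    obtain ⟨t, r, rfl⟩ : ∃ t r, m = Nat.pair t r := ⟨_, _, (Nat.pair_unpair m).symm⟩
    rcases Nat.eq_zero_or_pos t with rfl | ht
    · rw [LV_zero] at h
      split_ifs at h with c1 c2
      · exact absurd rfl h
      · exact absurd rfl h
      obtain ⟨s1, e1⟩ := TB_decode _ c1
      obtain ⟨s2, e2⟩ := TB_decode _ c2
      exact ⟨AForm.eq s1 s2, by simp [encF, e1, e2]⟩
    have hr := lt_pair_right (r := r) ht
    have h1 := lt_of_le_of_lt (Nat.unpair_left_le r) hr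
    have h2 := lt_of_le_of_lt (Nat.unpair_right_le r) hr
    rw [LV_pair ht] at h
    simp only [GF, Nat.unpair_pair] at h
    by_cases k1 : t ≤ 1
    · rw [if_pos k1] at h
      obtain rfl : t = 1 := by omega
      split_ifs at h with c1 c2
      · exact absurd rfl h
      · exact absurd rfl h
      obtain ⟨s1, e1⟩ := TB_decode _ c1
      obtain ⟨s2, e2⟩ := TB_decode _ c2
      exact ⟨AForm.lt s1 s2, by simp [encF, e1, e2]⟩
    rw [if_neg k1] at h
    by_cases k2 : t = 2
    · rw [if_pos k2] at h
      subst k2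
      obtain ⟨φ, e⟩ := ih _ hr h
      exact ⟨AForm.not φ, by simp [encF, e]⟩
    rw [if_neg k2] at h
    by_cases k3 : t = 3
    · rw [if_pos k3] at h
      subst k3
      split_ifs at h with c
      · obtain ⟨φ, e1⟩ := ih _ h1 h
        obtain ⟨ψ, e2⟩ := ih _ h2 (c ▸ h)
        exact ⟨AForm.or φ ψ, by simp [encF, e1, e2]⟩
      · exact absurd rfl h
    rw [if_neg k3] at h
    by_cases k4 : t = 4
    · rw [if_pos k4] at h
      subst k4
      split_ifs at h with c
      · obtain ⟨ψ, e2⟩ := ih _ h2 (by omega)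
        exact ⟨AForm.ex r.unpair.1 ψ, by simp [encF, e2]⟩
      · exact absurd rfl h
    rw [if_neg k4] at h
    exact absurd rfl h

/-- Decidability of the types used in the proof. -/
theorem computable_type (W : AForm → AForm) (G E : ℕ → ℕ) (hG : Primrec G) (hE : Primrec E)
    (hW : ∀ φ, encF (W φ) = G (encF φ)) (hEG : ∀ n, E (G n) = n) (k : ℕ) :
    ComputablePred (fun n : ℕ => ∃ ψ ∈ {ψ | ∃ φ, lv φ = k + 1 ∧ ψ = W φ}, encF ψ = n) := by
  have hp : PrimrecPred (fun n : ℕ => LV (E n) = k + 1 ∧ G (E n) = n) :=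
    (Primrec.eq.comp (LV_primrec.comp hE) (Primrec.const _)).and
      (Primrec.eq.comp (hG.comp hE) Primrec.id)
  obtain ⟨d, hd⟩ := hp
  have hc : ComputablePred (fun n : ℕ => LV (E n) = k + 1 ∧ G (E n) = n) := ⟨d, hd.to_comp⟩
  refine hc.of_eq fun n => ?_
  constructor
  · rintro ⟨h1, h2⟩
    obtain ⟨φ, e⟩ := LV_decode (E n) (by omega)
    exact ⟨W φ, ⟨φ, by rw [lv, e, h1], rfl⟩, by rw [hW, e, h2]⟩
  · rintro ⟨_, ⟨φ, h, rfl⟩, rfl⟩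
    rw [hW, hEG]
    exact ⟨h, rfl⟩

/-- The term for `2 ^ n`. -/
def dbl : ℕ → ATerm
  | 0 => ATerm.one
  | n + 1 => ATerm.add (dbl n) (dbl n)

theorem dbl_primrec : Primrec (fun n => encT (dbl n)) := by
  have h : Primrec₂ (fun (_ : ℕ) (x : ℕ) => Nat.pair 3 (Nat.pair x x)) :=
    Primrec₂.natPair.comp (Primrec.const 3) (Primrec₂.natPair.comp Primrec.snd Primrec.snd)
  refine (Primrec.nat_rec₁ (encT ATerm.one) h).of_eq fun n => ?_
  induction n with
  | zero => rfl
  | succ n ih => simp only [dbl, encT]; rw [← ih]; rfl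

theorem dbl_fv (n : ℕ) : (dbl n).fv = ∅ := by
  induction n with
  | zero => rfl
  | succ n ih => simp [dbl, ATerm.fv, ih]

/-- The formula stating that the `n`-th bit of variable `d` is one. -/
def bitF (d n : ℕ) : AForm :=
  AForm.ex (d + 1) (AForm.ex (d + 2) (AForm.and
    (AForm.eq (ATerm.var d) (ATerm.add (ATerm.mul (ATerm.var (d + 1)) (dbl (n + 1)))
      (ATerm.add (dbl n) (ATerm.var (d + 2)))))
    (AForm.lt (ATerm.var (d + 2)) (dbl n))))

theorem bitF_primrec (d : ℕ) : Primrec (fun n => encF (bitF d n)) := by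
  have h0 := dbl_primrec
  have h1 : Primrec (fun n => encT (dbl (n + 1))) := dbl_primrec.comp Primrec.succ
  have c (n : ℕ) : Primrec (fun _ : ℕ => n) := Primrec.const n
  simp only [bitF, encF, encT, AForm.and]
  have P {f g : ℕ → ℕ} (hf : Primrec f) (hg : Primrec g) : Primrec (fun n => Nat.pair (f n) (g n)) :=
    Primrec₂.natPair.comp hf hg
  repeat' first | with_reducible exact h0 | with_reducible exact h1 | with_reducible exact c _ | with_reducible refine P ?_ ?_

theorem bitF_fv (d n : ℕ) : (bitF d n).fv ⊆ {d} := by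
  intro x
  simp only [bitF, AForm.and, AForm.fv, ATerm.fv, dbl_fv, Finset.mem_erase, Finset.mem_union,
    Finset.mem_singleton, Finset.notMem_empty]
  tauto

def W1 (d : ℕ) (φ : AForm) : AForm :=
  AForm.or (AForm.not (AForm.or (bitF d (encF φ)) φ))
    (AForm.not (AForm.or (AForm.not (bitF d (encF φ))) (AForm.not φ)))

def W2 (d : ℕ) (φ : AForm) : AForm := AForm.or (AForm.not (bitF d (encF φ))) φ

theorem W1_computable (d k : ℕ) :
    ComputablePred (fun n : ℕ => ∃ ψ ∈ {ψ | ∃ φ, lv φ = k + 1 ∧ ψ = W1 d φ}, encF ψ = n) := by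
  have c (n : ℕ) : Primrec (fun _ : ℕ => n) := Primrec.const n
  have P {f g : ℕ → ℕ} (hf : Primrec f) (hg : Primrec g) : Primrec (fun n => Nat.pair (f n) (g n)) :=
    Primrec₂.natPair.comp hf hg
  have R : Primrec (fun n : ℕ => n.unpair.2) := Primrec.snd.comp Primrec.unpair
  have L : Primrec (fun n : ℕ => n.unpair.1) := Primrec.fst.comp Primrec.unpair
  have B := bitF_primrec d
  have I : Primrec (fun n : ℕ => n) := Primrec.id
  refine computable_type _ (fun n => Nat.pair 3 (Nat.pair
      (Nat.pair 2 (Nat.pair 3 (Nat.pair (encF (bitF d n)) n)))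
      (Nat.pair 2 (Nat.pair 3 (Nat.pair (Nat.pair 2 (encF (bitF d n))) (Nat.pair 2 n))))))
    (fun m => m.unpair.2.unpair.1.unpair.2.unpair.2.unpair.2) ?_ ?_ ?_ ?_ k
  · repeat' first | with_reducible exact B | with_reducible exact I | with_reducible exact c _ | with_reducible refine P ?_ ?_
  · exact R.comp (R.comp (R.comp (L.comp R)))
  · intro φ; simp [W1, encF]
  · intro n; simp

theorem W2_computable (d k : ℕ) :
    ComputablePred (fun n : ℕ => ∃ ψ ∈ {ψ | ∃ φ, lv φ = k + 1 ∧ ψ = W2 d φ}, encF ψ = n) := by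
  have c (n : ℕ) : Primrec (fun _ : ℕ => n) := Primrec.const n
  have P {f g : ℕ → ℕ} (hf : Primrec f) (hg : Primrec g) : Primrec (fun n => Nat.pair (f n) (g n)) :=
    Primrec₂.natPair.comp hf hg
  have R : Primrec (fun n : ℕ => n.unpair.2) := Primrec.snd.comp Primrec.unpair
  have B := bitF_primrec d
  have I : Primrec (fun n : ℕ => n) := Primrec.id
  refine computable_type _ (fun n => Nat.pair 3 (Nat.pair (Nat.pair 2 (encF (bitF d n))) n))
    (fun m => m.unpair.2.unpair.2) ?_ ?_ ?_ ?_ k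
  · repeat' first | with_reducible exact B | with_reducible exact I | with_reducible exact c _ | with_reducible refine P ?_ ?_
  · exact R.comp R
  · intro φ; simp [W2, encF]
  · intro n; simp

/-! ### Arithmetic in models -/

section Arith

variable {R : Type*} [CommSemiring R] [LinearOrder R] [IsStrictOrderedRing R]

theorem std_eq_cast (n : ℕ) : (std n : R) = (n : R) := by
  induction n with
  | zero => simp [std]
  | succ n ih => rw [Nat.cast_succ, ← ih]; rfl

theorem div_unique (h0 : ∀ x : R, 0 ≤ x) (hd : ∀ x y : R, x < y → x + 1 ≤ y)
    {m q q' y y' : R} (e : m * q + y = m * q' + y') (hy : y < m) (hy' : y' < m) : y = y' := by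
  have aux : ∀ {q q' y y' : R}, m * q + y = m * q' + y' → y < m → ¬ q < q' := by
    intro q q' y y' e hy h
    have h1 := hd _ _ h
    have h2 : m * (q + 1) ≤ m * q' := mul_le_mul_of_nonneg_left h1 (h0 m)
    have h3 := h0 y'
    have : m * q + y < m * q' + y' := by
      calc m * q + y < m * q + m := by gcongr
        _ = m * (q + 1) := by ring
        _ ≤ m * q' := h2
        _ ≤ _ := le_add_of_nonneg_right h3
    exact absurd e this.ne
  have : q = q' := le_antisymm (not_lt.1 (aux e.symm hy')) (not_lt.1 (aux e hy))
  subst this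
  exact add_left_cancel e

theorem mbeta_unique (h0 : ∀ x : R, 0 ≤ x) (hd : ∀ x y : R, x < y → x + 1 ≤ y)
    {c d i y y' : R} (h : mbeta c d i y) (h' : mbeta c d i y') : y = y' := by
  obtain ⟨q, e, l⟩ := h
  obtain ⟨q', e', l'⟩ := h'
  exact div_unique h0 hd (e.symm.trans e') l l'

theorem beta_exists (n : ℕ) : ∃ c d : ℕ, ∀ i ≤ n, ∃ q : ℕ, c = (1 + (i + 1) * d) * q + 2 ^ i ∧
    2 ^ i < 1 + (i + 1) * d := by
  let l : List ℕ := (List.range (n + 1)).map (fun i => 2 ^ i)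
  refine ⟨(Nat.unbeta l).unpair.1, (Nat.unbeta l).unpair.2, fun i hi => ?_⟩
  have hl : i < l.length := by simp [l]; omega
  have h := Nat.beta_unbeta_coe l ⟨i, hl⟩
  simp [Nat.beta, l] at h
  set c := (Nat.unbeta l).unpair.1
  set d := (Nat.unbeta l).unpair.2
  rw [← h, add_comm 1]
  exact ⟨c / ((i + 1) * d + 1), (Nat.div_add_mod _ _).symm, Nat.mod_lt _ (Nat.succ_pos _)⟩

theorem mpow_two (h0 : ∀ x : R, 0 ≤ x) (hd : ∀ x y : R, x < y → x + 1 ≤ y) (n : ℕ) (y : R) :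
    mpow (1 + 1) (std n) y ↔ y = 2 ^ n := by
  rw [std_eq_cast]
  constructor
  · rintro ⟨c, d, hz, hs, hn⟩
    have : ∀ j : ℕ, j ≤ n → mbeta c d (j : R) (2 ^ j) := by
      intro j
      induction j with
      | zero => intro _; simpa using hz
      | succ j ih =>
        intro hj
        have := hs j (2 ^ j) (by exact_mod_cast hj) (ih (by omega))
        rw [Nat.cast_succ, pow_succ, mul_comm]
        rwa [one_add_one_eq_two] at this
    exact mbeta_unique h0 hd hn (this n le_rfl)
  · rintro rfl
    obtain ⟨c, d, h⟩ := beta_exists n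
    have hb : ∀ i ≤ n, mbeta (c : R) d i (2 ^ i) := by
      intro i hi
      obtain ⟨q, e, l⟩ := h i hi
      exact ⟨q, by exact_mod_cast e, by exact_mod_cast l⟩
    have hlt : ∀ j : R, j < n → ∃ i : ℕ, i < n ∧ j = i := by
      clear hb h
      induction n with
      | zero => intro j hj; exact absurd (h0 j) (not_le.2 (by simpa using hj))
      | succ n ih =>
        intro j hj
        rcases lt_trichotomy j n with h | h | h
        · obtain ⟨i, hi, e⟩ := ih j h
          exact ⟨i, by omega, e⟩
        · exact ⟨n, by omega, h⟩
        · have := hd _ _ h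
          rw [Nat.cast_succ] at hj
          exact absurd hj (not_lt.2 this)
    refine ⟨c, d, by simpa using hb 0 (by omega), ?_, hb n le_rfl⟩
    intro j u hj hu
    obtain ⟨i, hi, rfl⟩ := hlt j hj
    rw [mbeta_unique h0 hd hu (hb i (by omega)), one_add_one_eq_two]
    have := hb (i + 1) (by omega)
    rwa [Nat.cast_succ, pow_succ, mul_comm] at this

theorem dbl_val (a : ℕ → R) (n : ℕ) : (dbl n).val a = 2 ^ n := by
  induction n with
  | zero => simp [dbl, ATerm.val]
  | succ n ih => simp only [dbl, ATerm.val, ih]; ring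

theorem bitF_sat (h0 : ∀ x : R, 0 ≤ x) (hd : ∀ x y : R, x < y → x + 1 ≤ y) (d n : ℕ)
    (a : ℕ → R) : (bitF d n).Sat a ↔ mack (std n) (a d) := by
  simp only [bitF, AForm.and, AForm.Sat, ATerm.val, dbl_val, mack, mpow_two h0 hd,
    Function.update_apply]
  simp only [not_or, not_not]
  simp [pow_succ, mul_two]

theorem mack_exists (h0 : ∀ x : R, 0 ≤ x) (hd : ∀ x y : R, x < y → x + 1 ≤ y) (K : ℕ)
    (T : Set ℕ) : ∃ c : R, ∀ n < K, (n ∈ T ↔ mack (std n) c) := by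
  classical
  let c : ℕ := Nat.ofBits (fun i : Fin K => decide (i.1 ∈ T))
  refine ⟨(c : R), fun n hn => ?_⟩
  have hc : n ∈ T ↔ c / 2 ^ n % 2 = 1 := by
    have h1 : c.testBit n = decide (n ∈ T) := Nat.testBit_ofBits_lt _ n hn
    rw [Nat.testBit_eq_decide_div_mod_eq] at h1
    simpa using (decide_eq_decide.1 h1).symm
  rw [hc]
  simp only [mack, mpow_two h0 hd]
  have e1 := Nat.div_add_mod c (2 ^ n)
  have e2 := Nat.div_add_mod (c / 2 ^ n) 2
  have l1 : c % 2 ^ n < 2 ^ n := Nat.mod_lt _ (by positivity)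
  have l2 : c / 2 ^ n % 2 < 2 := Nat.mod_lt _ (by norm_num)
  set q := c / 2 ^ n / 2
  set b := c / 2 ^ n % 2
  set r := c % 2 ^ n
  have ec : c = q * (2 ^ n + 2 ^ n) + (b * 2 ^ n + r) := by
    rw [← e1, ← e2]; ring
  constructor
  · intro hb
    refine ⟨2 ^ n, q, r, rfl, ?_, by exact_mod_cast l1⟩
    rw [hb, one_mul] at ec
    exact_mod_cast ec
  · rintro ⟨p, u, v, rfl, e, hv⟩
    by_contra hb
    have hb : b = 0 := by omega
    rw [hb, zero_mul, zero_add] at ec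
    have ec' : (c : R) = q * (2 ^ n + 2 ^ n) + r := by exact_mod_cast ec
    have l1' : (r : R) < 2 ^ n := by exact_mod_cast l1
    have hp : (0 : R) < 2 ^ n := by positivity
    have := div_unique (m := (2 ^ n + 2 ^ n : R)) (q := u) (q' := q) (y := 2 ^ n + v) (y' := r)
      h0 hd (by rw [mul_comm, ← e, ec', mul_comm]) (by gcongr)
      (l1'.trans (lt_add_of_pos_left _ hp))
    rw [← this] at l1'
    exact absurd l1' (not_lt.2 (le_add_of_nonneg_right (h0 v)))

end Arith

theorem pa_arith {M : Type*} [Zero M] [One M] [Add M] [Mul M] [LT M] (hM : IsPAModel M) :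
    (∀ (d n : ℕ) (a : ℕ → M), (bitF d n).Sat a ↔ mack (std n) (a d)) ∧
    (∀ (K : ℕ) (T : Set ℕ), ∃ c : M, ∀ n < K, (n ∈ T ↔ mack (std n) c)) := by
  classical
  have B : ∀ φ ∈ paBaseAx, ∀ x y z : M,
      AForm.Sat (fun n => if n = 0 then x else if n = 1 then y else z) φ :=
    fun φ h x y z => hM φ (Or.inl h) _
  simp only [paBaseAx, List.forall_mem_cons, AForm.Sat, ATerm.val, AForm.imp, AForm.and] at B
  simp only [if_true, one_ne_zero, if_false, OfNat.ofNat_ne_zero, OfNat.ofNat_ne_one,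
    ← imp_iff_not_or] at B
  obtain ⟨addA, addC, mulA, mulC, dist, addZ, mulZ, mulO, irr, tr, tri, addL, mulL, nn, disc,
    zo, -⟩ := B
  have z0 : M := 0
  let _ : CommSemiring M :=
    { add := (· + ·), mul := (· * ·), zero := 0, one := 1
      add_assoc := fun x y z => (addA x y z).symm
      add_comm := fun x y => addC x y 0
      zero_add := fun x => (addC 0 x 0).trans (addZ x 0 0)
      add_zero := fun x => addZ x 0 0
      mul_assoc := fun x y z => (mulA x y z).symm
      mul_comm := fun x y => mulC x y 0
      one_mul := fun x => (mulC 1 x 0).trans (mulO x 0 0)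
      mul_one := fun x => mulO x 0 0
      zero_mul := fun x => (mulC 0 x 0).trans (mulZ x 0 0)
      mul_zero := fun x => mulZ x 0 0
      left_distrib := fun x y z => dist x y z
      right_distrib := fun x y z => by
        show (x + y) * z = x * z + y * z
        rw [mulC (x + y) z 0, dist, mulC z x 0, mulC z y 0]
      nsmul := nsmulRec }
  let _ : LinearOrder M :=
    { lt := (· < ·), le := fun x y => x < y ∨ x = y
      le_refl := fun x => Or.inr rfl
      le_trans := by
        rintro x y z (h | rfl) (h' | rfl)
        · exact Or.inl (tr x y z h h')
        · exact Or.inl h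
        · exact Or.inl h'
        · exact Or.inr rfl
      lt_iff_le_not_ge := by
        intro x y
        constructor
        · intro h
          refine ⟨Or.inl h, ?_⟩
          rintro (h' | rfl)
          · exact irr x x x (tr x y x h h')
          · exact irr _ y y h
        · rintro ⟨h | rfl, h'⟩
          · exact h
          · exact absurd (Or.inr rfl) h'
      le_antisymm := by
        rintro x y (h | rfl) (h' | h')
        · exact absurd (tr x y x h h') (irr x x x)
        · exact h'.symm
        · rfl
        · rfl
      le_total := by
        intro x y
        rcases tri x y 0 with h | h | h
        · exact Or.inl (Or.inl h)
        · exact Or.inl (Or.inr h)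
        · exact Or.inr (Or.inl h)
      toDecidableLE := Classical.decRel _ }
  have _ : Nontrivial M := ⟨0, 1, fun h => irr (0 : M) 0 0 (by
    have := zo (0 : M) 0 0
    rw [← h] at this
    exact this)⟩
  have _ : IsStrictOrderedRing M :=
    { add_le_add_left := by
        rintro x y (h | rfl) z
        · exact Or.inl (addL x y z h)
        · exact Or.inr rfl
      le_of_add_le_add_left := by
        intro x y z h
        by_contra hc
        have h1 : z < y := not_le.1 hc
        have h2 : z + x < y + x := addL z y x h1
        rw [add_comm z, add_comm y] at h2
        exact absurd h (not_le.2 h2)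
      zero_le_one := Or.inl (zo 0 0 0)
      mul_lt_mul_of_pos_left := by
        intro z hz x y h
        have h2 : x * z < y * z := mulL x y z hz h
        rwa [mul_comm x, mul_comm y] at h2
      mul_lt_mul_of_pos_right := fun z hz x y h => mulL x y z hz h }
  have h0 : ∀ x : M, 0 ≤ x := fun x => not_lt.1 (nn x 0 0)
  have hd : ∀ x y : M, x < y → x + 1 ≤ y := by
    intro x y h
    have h' := disc x y 0
    show x + 1 < y ∨ x + 1 = y
    tauto
  exact ⟨bitF_sat h0 hd, mack_exists h0 hd⟩


/-! ### Back and forth -/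

theorem val_congr {M : Type*} [Zero M] [One M] [Add M] [Mul M] (t : ATerm) (a b : ℕ → M)
    (h : ∀ i ∈ t.fv, a i = b i) : t.val a = t.val b := by
  induction t with
  | var n => exact h n (by simp [ATerm.fv])
  | zero => rfl
  | one => rfl
  | add s t hs ht =>
    simp only [ATerm.fv, Finset.mem_union] at h
    simp only [ATerm.val]
    rw [hs fun i hi => h i (Or.inl hi), ht fun i hi => h i (Or.inr hi)]
  | mul s t hs ht =>
    simp only [ATerm.fv, Finset.mem_union] at h
    simp only [ATerm.val]
    rw [hs fun i hi => h i (Or.inl hi), ht fun i hi => h i (Or.inr hi)]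

theorem sat_congr {M : Type*} [Zero M] [One M] [Add M] [Mul M] [LT M] (φ : AForm) :
    ∀ (a b : ℕ → M), (∀ i ∈ φ.fv, a i = b i) → (φ.Sat a ↔ φ.Sat b) := by
  induction φ with
  | eq s t =>
    intro a b h
    simp only [AForm.fv, Finset.mem_union] at h
    simp only [AForm.Sat]
    rw [val_congr s a b fun i hi => h i (Or.inl hi), val_congr t a b fun i hi => h i (Or.inr hi)]
  | lt s t =>
    intro a b h
    simp only [AForm.fv, Finset.mem_union] at h
    simp only [AForm.Sat]
    rw [val_congr s a b fun i hi => h i (Or.inl hi), val_congr t a b fun i hi => h i (Or.inr hi)]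
  | not φ ih => intro a b h; exact not_congr (ih a b h)
  | or φ ψ h1 h2 =>
    intro a b h
    simp only [AForm.fv, Finset.mem_union] at h
    exact or_congr (h1 a b fun i hi => h i (Or.inl hi)) (h2 a b fun i hi => h i (Or.inr hi))
  | ex n φ ih =>
    intro a b h
    refine exists_congr fun x => ih _ _ fun i hi => ?_
    by_cases e : i = n
    · subst e; simp
    · rw [Function.update_of_ne e, Function.update_of_ne e]
      exact h i (by simp [AForm.fv, e, hi])

theorem sat_congr_lv {M : Type*} [Zero M] [One M] [Add M] [Mul M] [LT M] {φ : AForm} {k : ℕ}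
    (hφ : lv φ = k + 1) {a b : ℕ → M} (h : ∀ i < k, a i = b i) : φ.Sat a ↔ φ.Sat b :=
  sat_congr φ a b fun i hi => h i (Finset.mem_range.1 (lv_fv φ k hφ hi))

theorem encT_inj : ∀ s t : ATerm, encT s = encT t → s = t := by
  intro s
  induction s with
  | var n => intro t h; cases t <;> simp_all [encT, Nat.pair_eq_pair]
  | zero => intro t h; cases t <;> simp_all [encT, Nat.pair_eq_pair]
  | one => intro t h; cases t <;> simp_all [encT, Nat.pair_eq_pair]
  | add s1 s2 h1 h2 =>
    intro t h
    cases t <;> simp only [encT, Nat.pair_eq_pair] at h <;> try omega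
    rw [h1 _ h.2.1, h2 _ h.2.2]
  | mul s1 s2 h1 h2 =>
    intro t h
    cases t <;> simp only [encT, Nat.pair_eq_pair] at h <;> try omega
    rw [h1 _ h.2.1, h2 _ h.2.2]

theorem encF_inj : ∀ φ ψ : AForm, encF φ = encF ψ → φ = ψ := by
  intro φ
  induction φ with
  | eq s t =>
    intro ψ h
    cases ψ <;> simp only [encF, Nat.pair_eq_pair] at h <;> try omega
    rw [encT_inj _ _ h.2.1, encT_inj _ _ h.2.2]
  | lt s t =>
    intro ψ h
    cases ψ <;> simp only [encF, Nat.pair_eq_pair] at h <;> try omega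
    rw [encT_inj _ _ h.2.1, encT_inj _ _ h.2.2]
  | not φ ih =>
    intro ψ h
    cases ψ <;> simp only [encF, Nat.pair_eq_pair] at h <;> try omega
    rw [ih _ h.2]
  | or φ1 φ2 h1 h2 =>
    intro ψ h
    cases ψ <;> simp only [encF, Nat.pair_eq_pair] at h <;> try omega
    rw [h1 _ h.2.1, h2 _ h.2.2]
  | ex n φ ih =>
    intro ψ h
    cases ψ <;> simp only [encF, Nat.pair_eq_pair] at h <;> try omega
    rw [h.2.1, ih _ h.2.2]

section BF

variable {M N : Type*} [Zero M] [One M] [Add M] [Mul M] [LT M]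
    [Zero N] [One N] [Add N] [Mul N] [LT N]

/-- Equivalence of two tuples for formulas of level `k`. -/
def E (k : ℕ) (a : ℕ → M) (b : ℕ → N) : Prop :=
  ∀ φ : AForm, lv φ = k + 1 → (φ.Sat a ↔ φ.Sat b)

theorem type_coded (hM : IsPAModel M) (hrsM : RecSat M) (k : ℕ) (a : ℕ → M) :
    ∃ T ∈ SSy M, ∀ φ : AForm, lv φ = k + 1 → (encF φ ∈ T ↔ φ.Sat a) := by
  obtain ⟨hbit, hex⟩ := pa_arith hM
  have sat1 : ∀ (c : M) (φ : AForm), lv φ = k + 1 →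
      ((W1 k φ).Sat (Function.update a k c) ↔ (φ.Sat a ↔ mack (std (encF φ)) c)) := by
    intro c φ hφ
    have h1 : φ.Sat (Function.update a k c) ↔ φ.Sat a :=
      sat_congr_lv hφ fun i hi => Function.update_of_ne (by omega) _ _
    simp only [W1, AForm.Sat, hbit, Function.update_self, h1]
    tauto
  have key := hrsM {ψ | ∃ φ, lv φ = k + 1 ∧ ψ = W1 k φ} k a (W1_computable k k) ?_ ?_
  · obtain ⟨c, hc⟩ := key
    refine ⟨{n | mack (std n) c}, ⟨c, fun n => Iff.rfl⟩, fun φ hφ => ?_⟩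
    exact ((sat1 c φ hφ).1 (hc _ ⟨φ, hφ, rfl⟩)).symm
  · refine ⟨Finset.range k, ?_⟩
    rintro _ ⟨φ, hφ, rfl⟩
    have h1 := lv_fv φ k hφ
    have h2 : (bitF k (encF φ)).fv ⊆ insert k (Finset.range k) :=
      (bitF_fv k (encF φ)).trans (by simp)
    have h3 := h1.trans (Finset.subset_insert k _)
    simp only [W1, AForm.fv]
    exact Finset.union_subset (Finset.union_subset h2 h3) (Finset.union_subset h2 h3)
  · intro s hs
    obtain ⟨K, hK⟩ : ∃ K, ∀ φ, W1 k φ ∈ s → encF φ < K := by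
      refine ⟨s.sup encF + 1, fun φ hφ => ?_⟩
      have h1 : encF (W1 k φ) ≤ s.sup encF := Finset.le_sup hφ
      have h2 : encF φ ≤ encF (W1 k φ) := by
        simp only [W1, encF]
        refine le_trans ?_ (Nat.right_le_pair _ _)
        refine le_trans ?_ (Nat.left_le_pair _ _)
        refine le_trans ?_ (Nat.right_le_pair _ _)
        refine le_trans ?_ (Nat.right_le_pair _ _)
        exact Nat.right_le_pair _ _
      omega
    obtain ⟨c, hc⟩ := hex K {n | ∃ φ, encF φ = n ∧ φ.Sat a}
    refine ⟨c, fun ψ hψ => ?_⟩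
    obtain ⟨φ, hφ, rfl⟩ := hs hψ
    rw [sat1 c φ hφ, ← hc _ (hK φ hψ)]
    constructor
    · intro h
      exact ⟨φ, rfl, h⟩
    · rintro ⟨φ', e, h⟩
      rwa [← encF_inj _ _ e]

theorem step (hM : IsPAModel M) (hN : IsPAModel N) (hrsM : RecSat M) (hrsN : RecSat N)
    (hSSy : SSy M ⊆ SSy N) (k : ℕ) (a : ℕ → M) (b : ℕ → N) (h : E k a b) (x : M) :
    ∃ y : N, E (k + 1) (Function.update a k x) (Function.update b k y) := by
  obtain ⟨T, hT, hTs⟩ := type_coded hM hrsM (k + 1) (Function.update a k x)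
  obtain ⟨d, hd⟩ := hSSy hT
  obtain ⟨hbit, -⟩ := pa_arith hN
  have sat2 : ∀ (y : N) (φ : AForm), lv φ = k + 1 + 1 →
      ((W2 (k + 1) φ).Sat (Function.update (Function.update b (k + 1) d) k y) ↔
        (encF φ ∈ T → φ.Sat (Function.update b k y))) := by
    intro y φ hφ
    have h1 : φ.Sat (Function.update (Function.update b (k + 1) d) k y) ↔
        φ.Sat (Function.update b k y) :=
      sat_congr_lv hφ fun i hi => by
        by_cases e : i = k
        · subst e; simp
        · simp [Function.update_apply, e, show i ≠ k + 1 by omega]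
    simp only [W2, AForm.Sat, hbit, h1, hd]
    simp only [Function.update_apply, if_true]
    rw [if_neg (by omega)]
    tauto
  have key := hrsN {ψ | ∃ φ, lv φ = k + 1 + 1 ∧ ψ = W2 (k + 1) φ} k
    (Function.update b (k + 1) d) (W2_computable (k + 1) (k + 1)) ?_ ?_
  · obtain ⟨y, hy⟩ := key
    have hy' : ∀ φ : AForm, lv φ = k + 1 + 1 → φ.Sat (Function.update a k x) →
        φ.Sat (Function.update b k y) := fun φ hφ hs =>
      (sat2 y φ hφ).1 (hy _ ⟨φ, hφ, rfl⟩) ((hTs φ hφ).2 hs)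
    refine ⟨y, fun φ hφ => ⟨hy' φ hφ, fun hs => ?_⟩⟩
    by_contra hn
    exact hy' (AForm.not φ) (by rw [lv_not]; exact hφ) hn hs
  · refine ⟨Finset.range (k + 2), ?_⟩
    rintro _ ⟨φ, hφ, rfl⟩
    have h1 := lv_fv φ (k + 1) hφ
    have h2 : (bitF (k + 1) (encF φ)).fv ⊆ insert k (Finset.range (k + 2)) :=
      (bitF_fv (k + 1) (encF φ)).trans (by simp)
    have h3 : φ.fv ⊆ insert k (Finset.range (k + 2)) :=
      h1.trans ((Finset.range_mono (by omega)).trans (Finset.subset_insert k _))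
    simp only [W2, AForm.fv]
    exact Finset.union_subset h2 h3
  · intro s
    have aux : ↑s ⊆ {ψ | ∃ φ, lv φ = k + 1 + 1 ∧ ψ = W2 (k + 1) φ} →
        ∃ χ : AForm, lv χ = k + 1 + 1 ∧ χ.Sat (Function.update a k x) ∧
        ∀ y : N, χ.Sat (Function.update b k y) →
          ∀ ψ ∈ s, ψ.Sat (Function.update (Function.update b (k + 1) d) k y) := by
      induction s using Finset.induction_on with
      | empty =>
        intro _
        refine ⟨AForm.eq (ATerm.var k) (ATerm.var k), by simp [lv_eq, tlv_var], rfl, ?_⟩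
        intro y _ ψ hψ
        simp at hψ
      | insert ψ s _ ih =>
        intro hs
        rw [Finset.coe_insert, Set.insert_subset_iff] at hs
        obtain ⟨χ, hχ, hχs, hχn⟩ := ih hs.2
        obtain ⟨φ, hφ, rfl⟩ := hs.1
        by_cases hin : encF φ ∈ T
        · refine ⟨AForm.and χ φ, by simp [AForm.and, lv_not, lv_or, hχ, hφ], ?_, ?_⟩
          · simp only [AForm.and, AForm.Sat, not_or, not_not]
            exact ⟨hχs, (hTs φ hφ).1 hin⟩
          · intro y hy ψ hψ
            simp only [AForm.and, AForm.Sat, not_or, not_not] at hy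
            rcases Finset.mem_insert.1 hψ with rfl | hψ
            · exact (sat2 y φ hφ).2 fun _ => hy.2
            · exact hχn y hy.1 ψ hψ
        · refine ⟨χ, hχ, hχs, fun y hy ψ hψ => ?_⟩
          rcases Finset.mem_insert.1 hψ with rfl | hψ
          · exact (sat2 y φ hφ).2 fun h => absurd h hin
          · exact hχn y hy ψ hψ
    intro hs
    obtain ⟨χ, hχ, hχs, hχn⟩ := aux hs
    have h1 := (h (AForm.ex k χ) (by rw [lv_ex, if_pos hχ])).1 ⟨x, hχs⟩
    obtain ⟨y, hy⟩ := h1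
    exact ⟨y, hχn y hy⟩

theorem E_symm {k : ℕ} {a : ℕ → M} {b : ℕ → N} (h : E k a b) : E k b a :=
  fun φ hφ => (h φ hφ).symm

theorem back_and_forth [Countable M] [Countable N]
    (forth : ∀ k (a : ℕ → M) (b : ℕ → N), E k a b → ∀ x,
      ∃ y, E (k + 1) (Function.update a k x) (Function.update b k y))
    (back : ∀ k (a : ℕ → M) (b : ℕ → N), E k a b → ∀ y,
      ∃ x, E (k + 1) (Function.update a k x) (Function.update b k y))
    (start : E 0 (fun _ => (0 : M)) (fun _ => (0 : N))) :
    ∃ (a : ℕ → M) (b : ℕ → N), Function.Surjective a ∧ Function.Surjective b ∧ ∀ k, E k a b := by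
  haveI : Nonempty M := ⟨0⟩
  haveI : Nonempty N := ⟨0⟩
  obtain ⟨eM, heM⟩ := exists_surjective_nat M
  obtain ⟨eN, heN⟩ := exists_surjective_nat N
  have nxt : ∀ k (p : {p : (ℕ → M) × (ℕ → N) // E k p.1 p.2}), ∃ q : M × N,
      E (k + 1) (Function.update p.1.1 k q.1) (Function.update p.1.2 k q.2) ∧
      (∀ i, k = 2 * i → q.1 = eM i) ∧ (∀ i, k = 2 * i + 1 → q.2 = eN i) := by
    rintro k ⟨⟨a, b⟩, h⟩
    rcases Nat.even_or_odd' k with ⟨i, hi | hi⟩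
    · obtain ⟨y, hy⟩ := forth k a b h (eM i)
      exact ⟨(eM i, y), hy, fun j hj => by rw [show j = i by omega], fun j hj => by omega⟩
    · obtain ⟨x, hx⟩ := back k a b h (eN i)
      exact ⟨(x, eN i), hx, fun j hj => by omega, fun j hj => by rw [show j = i by omega]⟩
  choose q hq hqM hqN using nxt
  let s : (k : ℕ) → {p : (ℕ → M) × (ℕ → N) // E k p.1 p.2} := fun k =>
    Nat.rec (motive := fun k => {p : (ℕ → M) × (ℕ → N) // E k p.1 p.2}) ⟨(_, _), start⟩
      (fun k p => ⟨(Function.update p.1.1 k (q k p).1, Function.update p.1.2 k (q k p).2), hq k p⟩) k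
  have hs1 : ∀ k, (s (k + 1)).1.1 = Function.update (s k).1.1 k (q k (s k)).1 := fun k => rfl
  have hs2 : ∀ k, (s (k + 1)).1.2 = Function.update (s k).1.2 k (q k (s k)).2 := fun k => rfl
  let a : ℕ → M := fun k => (q k (s k)).1
  let b : ℕ → N := fun k => (q k (s k)).2
  have ha : ∀ k, ∀ i < k, (s k).1.1 i = a i := by
    intro k
    induction k with
    | zero => intro i hi; omega
    | succ k ih =>
      intro i hi
      rw [hs1]
      by_cases e : i = k
      · subst e; simp [a]
      · rw [Function.update_of_ne e]; exact ih i (by omega)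
  have hb : ∀ k, ∀ i < k, (s k).1.2 i = b i := by
    intro k
    induction k with
    | zero => intro i hi; omega
    | succ k ih =>
      intro i hi
      rw [hs2]
      by_cases e : i = k
      · subst e; simp [b]
      · rw [Function.update_of_ne e]; exact ih i (by omega)
  refine ⟨a, b, ?_, ?_, ?_⟩
  · intro x
    obtain ⟨i, rfl⟩ := heM x
    exact ⟨2 * i, hqM _ _ i rfl⟩
  · intro y
    obtain ⟨i, rfl⟩ := heN y
    exact ⟨2 * i + 1, hqN _ _ i rfl⟩
  · intro k φ hφ
    rw [← sat_congr_lv hφ (ha k), ← sat_congr_lv hφ (hb k)]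
    exact (s k).2 φ hφ

theorem iso_of_E {a : ℕ → M} {b : ℕ → N} (ha : Function.Surjective a)
    (hb : Function.Surjective b) (h : ∀ k, E k a b) :
    ∃ h : M → N, Function.Bijective h ∧
      h 0 = 0 ∧ h 1 = 1 ∧
      (∀ x y : M, h (x + y) = h x + h y) ∧
      (∀ x y : M, h (x * y) = h x * h y) ∧
      (∀ x y : M, x < y ↔ h x < h y) := by
  have heq : ∀ s t : ATerm, s.val a = t.val a ↔ s.val b = t.val b := by
    intro s t
    have hp : 0 < lv (AForm.eq s t) := by rw [lv_eq]; exact lt_max_of_lt_left (tlv_pos s)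
    exact h (lv (AForm.eq s t) - 1) (AForm.eq s t) (by omega)
  have hlt : ∀ s t : ATerm, s.val a < t.val a ↔ s.val b < t.val b := by
    intro s t
    have hp : 0 < lv (AForm.lt s t) := by rw [lv_lt]; exact lt_max_of_lt_left (tlv_pos s)
    exact h (lv (AForm.lt s t) - 1) (AForm.lt s t) (by omega)
  choose g hg using ha
  have hv : ∀ (t : ATerm), b (g (t.val a)) = t.val b := fun t =>
    (heq (ATerm.var (g (t.val a))) t).1 (hg _)
  refine ⟨fun x => b (g x), ⟨?_, ?_⟩, hv ATerm.zero, hv ATerm.one, ?_, ?_, ?_⟩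
  · intro x y e
    have := (heq (ATerm.var (g x)) (ATerm.var (g y))).2 e
    simpa only [ATerm.val, hg] using this
  · intro y
    obtain ⟨i, rfl⟩ := hb y
    exact ⟨a i, hv (ATerm.var i)⟩
  · intro x y
    have := hv (ATerm.add (ATerm.var (g x)) (ATerm.var (g y)))
    simpa only [ATerm.val, hg] using this
  · intro x y
    have := hv (ATerm.mul (ATerm.var (g x)) (ATerm.var (g y)))
    simpa only [ATerm.val, hg] using this
  · intro x y
    have := hlt (ATerm.var (g x)) (ATerm.var (g y))
    simpa only [ATerm.val, hg] using this

end BF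

end RSIso

/-- two countable recursively saturated models of PA with the
same theory and the same standard system are isomorphic. -/
theorem recSat_models_isomorphic
    {M N : Type*} [Zero M] [One M] [Add M] [Mul M] [LT M]
    [Zero N] [One N] [Add N] [Mul N] [LT N]
    [Countable M] [Countable N]
    (hM : IsPAModel M) (hN : IsPAModel N)
    (hrsM : RecSat M) (hrsN : RecSat N)
    (hTh : ∀ φ : AForm, AForm.fv φ = ∅ →
      ((∀ a : ℕ → M, AForm.Sat a φ) ↔ (∀ b : ℕ → N, AForm.Sat b φ)))
    (hSSy : SSy M = SSy N) :
    ∃ h : M → N, Function.Bijective h ∧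
      h 0 = 0 ∧ h 1 = 1 ∧
      (∀ x y : M, h (x + y) = h x + h y) ∧
      (∀ x y : M, h (x * y) = h x * h y) ∧
      (∀ x y : M, x < y ↔ h x < h y) := by
  refine RSIso.back_and_forth ?_ ?_ ?_ |>.elim fun a h => h.elim fun b h =>
    RSIso.iso_of_E h.1 h.2.1 h.2.2
  · intro k a b h x
    exact RSIso.step hM hN hrsM hrsN hSSy.subset k a b h x
  · intro k a b h y
    obtain ⟨x, hx⟩ := RSIso.step hN hM hrsN hrsM hSSy.symm.subset k b a (RSIso.E_symm h) y
    exact ⟨x, RSIso.E_symm hx⟩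
  · intro φ hφ
    have hfv : AForm.fv φ = ∅ := Finset.subset_empty.1 (RSIso.lv_fv φ 0 hφ)
    have h := hTh φ hfv
    constructor
    · intro hs
      exact h.1 (fun a => (RSIso.sat_congr φ _ _ (by simp [hfv])).1 hs) _
    · intro hs
      exact h.2 (fun a => (RSIso.sat_congr φ _ _ (by simp [hfv])).1 hs) _
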